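/- Let k, l ∈ ℝ satisfy k > −1, l > −1/2, k + l + 1/2 > 0, and k < l + 3/2. Let E₀ > 0 and let φ : (0,∞) → [0,∞) be measurable, locally essentially bounded on (0, E₀), with φ(E) = 0 for E ≥ E₀, and φ(E) = c(E₀ − E)₊^k + O((E₀ − E)₊^{k+δ}) as E → E₀− for some constants c > 0 and δ > 0. Let (λ, μ) ∈ C¹([0,∞))² with λ(0) = 0 satisfy the field equations e^{−2λ(r)}(2rλ'(r) − 1) + 1 = 8πr²ρ(r) and e^{−2λ(r)}(2rμ'(r) + 1) − 1 = 8πr²p(r) for r > 0, where ρ(r) = 2π c_{l,−1/2} r^{2l} (e^{−(2l+4)μ(r)} h_{l+3/2}(e^{μ(r)}) + e^{−(2l+2)μ(r)} h_{l+1/2}(e^{μ(r)})), p(r) = 2π c_{l,1/2} r^{2l} e^{−(2l+4)μ(r)} h_{l+3/2}(e^{μ(r)}), h_m(u) = ∫_u^{E₀} φ(E)(E² − u²)₊^m dE, and c_{a,b} = ∫₀¹ s^a(1−s)^b ds. Then there exists R < ∞ such that ρ(r) = 0 for all r ≥ R, and the ADM mass M = 4π∫₀^∞ r²ρ(r) dr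 is finite. -/

import Mathlib

open MeasureTheory Real Set

/-- The constant `c_{a,b} = ∫₀¹ s^a (1-s)^b ds`. -/
noncomputable def cab (a b : ℝ) : ℝ := ∫ s in (0:ℝ)..1, s ^ a * (1 - s) ^ b

/-- The function `h_m(u) = ∫_u^{E₀} φ(E) (E² - u²)₊^m dE`. -/
noncomputable def hfun (φ : ℝ → ℝ) (E₀ m u : ℝ) : ℝ :=
  ∫ E in u..E₀, φ E * (max (E ^ 2 - u ^ 2) 0) ^ m

/-- The energy density of the reduced static spherically symmetric
Vlasov-Einstein system with ansatz `f = φ(E) L^l`. -/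
noncomputable def rhoRedVE (φ : ℝ → ℝ) (E₀ l : ℝ) (mu : ℝ → ℝ) (r : ℝ) : ℝ :=
  2 * Real.pi * cab l (-(1/2)) * r ^ (2 * l) *
    (Real.exp (-(2 * l + 4) * mu r) * hfun φ E₀ (l + 3/2) (Real.exp (mu r)) +
      Real.exp (-(2 * l + 2) * mu r) * hfun φ E₀ (l + 1/2) (Real.exp (mu r)))

/-- The radial pressure of the reduced static spherically symmetric
Vlasov-Einstein system with ansatz `f = φ(E) L^l`. -/
noncomputable def pRedVE (φ : ℝ → ℝ) (E₀ l : ℝ) (mu : ℝ → ℝ) (r : ℝ) : ℝ :=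
  2 * Real.pi * cab l (1/2) * r ^ (2 * l) *
    Real.exp (-(2 * l + 4) * mu r) * hfun φ E₀ (l + 3/2) (Real.exp (mu r))

/-!
The field equation for `λ` says that the Misner–Sharp mass `m` satisfies `m' = 4π r² ρ`, and the
one for `μ` gives `μ' ≥ m / r²`, so `μ` increases. The matter vanishes once `μ` reaches `log E₀`;
suppose it never does. Integrating `μ' ≥ m / r²` outwards yields `m / r ≤ log E₀ - μ`, while
`φ ≳ (E₀ - E)^k` near `E₀` yields `ρ ≳ r^{2l} (log E₀ - μ)^n` with `n = k + l + 3/2`. Hence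
`m' ≳ r^{2l + 2 - n} m^n`, which has no global positive solution because `n > 1` and
`2l + 2 - n > -1`: these are the conditions `k + l + 1/2 > 0` and `k < l + 3/2`.
-/

open Filter Asymptotics
open scoped Topology

lemma cab_eq_beta {a b : ℝ} (ha : -1 < a) (hb : -1 < b) :
    cab a b = ProbabilityTheory.beta (a + 1) (b + 1) := by
  rw [ProbabilityTheory.beta_eq_betaIntegralReal _ _ (by linarith) (by linarith),
    Complex.betaIntegral, cab, ← Complex.ofReal_re (∫ s in (0 : ℝ)..1, s ^ a * (1 - s) ^ b),
    ← intervalIntegral.integral_ofReal]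
  congr 1
  refine intervalIntegral.integral_congr fun s hs => ?_
  rw [uIcc_of_le zero_le_one] at hs
  simp only [Complex.ofReal_mul, Complex.ofReal_cpow hs.1, Complex.ofReal_cpow (sub_nonneg.2 hs.2),
    Complex.ofReal_sub, Complex.ofReal_add, Complex.ofReal_one, add_sub_cancel_right]

lemma cab_pos {a b : ℝ} (ha : -1 < a) (hb : -1 < b) : 0 < cab a b := by
  rw [cab_eq_beta ha hb]
  exact ProbabilityTheory.beta_pos (by linarith) (by linarith)

lemma integral_rpow_sub_mul_sub_rpow {u v k m : ℝ} (huv : u < v) :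
    ∫ x in u..v, (v - x) ^ k * (x - u) ^ m = (v - u) ^ (k + m + 1) * cab k m := by
  have hd : 0 < v - u := sub_pos.2 huv
  have hsubst := intervalIntegral.integral_comp_sub_mul (a := 0) (b := 1)
    (fun x => (v - x) ^ k * (x - u) ^ m) hd.ne' v
  rw [mul_one, mul_zero, sub_sub_cancel, sub_zero, smul_eq_mul, eq_inv_mul_iff_mul_eq₀ hd.ne']
    at hsubst
  have hscale : ∫ s in (0 : ℝ)..1, (v - (v - (v - u) * s)) ^ k * (v - (v - u) * s - u) ^ m =
      (v - u) ^ k * (v - u) ^ m * cab k m := by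
    rw [cab, ← intervalIntegral.integral_const_mul]
    refine intervalIntegral.integral_congr fun s hs => ?_
    rw [uIcc_of_le zero_le_one] at hs
    have h : v - (v - u) * s - u = (v - u) * (1 - s) := by ring
    simp only [h, sub_sub_cancel]
    rw [mul_rpow hd.le hs.1, mul_rpow hd.le (sub_nonneg.2 hs.2)]
    ring
  rw [← hsubst, hscale, rpow_add hd, rpow_add hd, rpow_one]
  ring

lemma intervalIntegrable_sub_rpow {k : ℝ} (hk : -1 < k) (u v : ℝ) :
    IntervalIntegrable (fun x => (v - x) ^ k) volume u v := by
  simpa only [sub_sub_cancel, sub_zero] using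
    (intervalIntegral.intervalIntegrable_rpow' (a := v - u) (b := 0) hk).comp_sub_left v

section Profile

variable {φ : ℝ → ℝ} {E₀ k m u c : ℝ}

lemma hfun_eq_zero (hvanish : ∀ E, E₀ ≤ E → φ E = 0) (hu : E₀ ≤ u) : hfun φ E₀ m u = 0 := by
  refine (intervalIntegral.integral_congr (g := fun _ => 0) fun E hE => ?_).trans
    intervalIntegral.integral_zero
  rw [uIcc_of_ge hu] at hE
  simp only [hvanish E hE.1, zero_mul]

lemma hfun_nonneg (hnonneg : ∀ E, 0 < E → 0 ≤ φ E) (hvanish : ∀ E, E₀ ≤ E → φ E = 0)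
    (hu : 0 < u) : 0 ≤ hfun φ E₀ m u := by
  rcases le_total E₀ u with h | h
  · exact (hfun_eq_zero hvanish h).ge
  · exact intervalIntegral.integral_nonneg h fun E hE =>
      mul_nonneg (hnonneg E (hu.trans_le hE.1)) (rpow_nonneg (le_max_right _ _) _)

lemma intervalIntegrable_mul_max_rpow (hm : 0 ≤ m) {v w : ℝ}
    (hφint : IntervalIntegrable φ volume v w) :
    IntervalIntegrable (fun E => φ E * (max (E ^ 2 - u ^ 2) 0) ^ m) volume v w :=
  hφint.mul_continuousOn
    ((Continuous.rpow_const (by fun_prop) fun _ => Or.inr hm).continuousOn)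

lemma hfun_antitoneOn (hm : 0 ≤ m) (hnonneg : ∀ E, 0 < E → 0 ≤ φ E)
    (hφint : ∀ u ∈ Ioc 0 E₀, IntervalIntegrable φ volume u E₀) :
    AntitoneOn (hfun φ E₀ m) (Ioc 0 E₀) := by
  intro u hu w hw huw
  have hφintw : IntervalIntegrable φ volume w E₀ := hφint w hw
  calc hfun φ E₀ m w ≤ ∫ E in w..E₀, φ E * (max (E ^ 2 - u ^ 2) 0) ^ m := by
        refine intervalIntegral.integral_mono_on hw.2 (intervalIntegrable_mul_max_rpow hm hφintw)
          (intervalIntegrable_mul_max_rpow hm hφintw) fun E hE => ?_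
        have hE0 := hnonneg E (hw.1.trans_le hE.1)
        have hu0 := hu.1.le
        gcongr
    _ ≤ hfun φ E₀ m u := by
        refine intervalIntegral.integral_mono_interval huw hw.2 le_rfl
          (ae_restrict_of_forall_mem measurableSet_Ioc fun E hE => ?_)
          (intervalIntegrable_mul_max_rpow hm (hφint u hu))
        exact mul_nonneg (hnonneg E (hu.1.trans hE.1)) (rpow_nonneg (le_max_right _ _) _)

lemma mul_rpow_le_hfun (hk : -1 < k) (hm : 0 ≤ m) (hc : 0 ≤ c) (hu : 0 ≤ u) (huE : u < E₀)
    (hφint : IntervalIntegrable φ volume u E₀)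
    (hlow : ∀ E ∈ Ioo u E₀, c * (E₀ - E) ^ k ≤ φ E) :
    c * (2 * u) ^ m * cab k m * (E₀ - u) ^ (k + m + 1) ≤ hfun φ E₀ m u := by
  have hbeta : IntervalIntegrable (fun E => (E₀ - E) ^ k * (E - u) ^ m) volume u E₀ :=
    (intervalIntegrable_sub_rpow hk u E₀).mul_continuousOn
      ((Continuous.rpow_const (by fun_prop) fun _ => Or.inr hm).continuousOn)
  calc c * (2 * u) ^ m * cab k m * (E₀ - u) ^ (k + m + 1)
      = ∫ E in u..E₀, c * (2 * u) ^ m * ((E₀ - E) ^ k * (E - u) ^ m) := by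
        rw [intervalIntegral.integral_const_mul, integral_rpow_sub_mul_sub_rpow huE]
        ring
    _ ≤ hfun φ E₀ m u := by
        refine intervalIntegral.integral_mono_on_of_le_Ioo huE.le (hbeta.const_mul _)
          (intervalIntegrable_mul_max_rpow hm hφint) fun E hE => ?_
        have hEu : 0 ≤ E - u := by linarith [hE.1]
        have hEE₀ : 0 ≤ E₀ - E := by linarith [hE.2]
        have hfactor : 2 * u * (E - u) ≤ max (E ^ 2 - u ^ 2) 0 :=
          le_max_of_le_left (by nlinarith)
        calc c * (2 * u) ^ m * ((E₀ - E) ^ k * (E - u) ^ m)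
            = c * (E₀ - E) ^ k * (2 * u * (E - u)) ^ m := by
              rw [mul_rpow (by positivity) hEu]
              ring
          _ ≤ φ E * (max (E ^ 2 - u ^ 2) 0) ^ m := by
              gcongr
              · exact le_trans (by positivity) (hlow E hE)
              · exact hlow E hE

lemma exists_mul_rpow_le_hfun (hk : -1 < k) (hm : 0 ≤ m) (hE₀ : 0 < E₀) (hc : 0 < c)
    (hnonneg : ∀ E, 0 < E → 0 ≤ φ E) (hφint : ∀ u ∈ Ioc 0 E₀, IntervalIntegrable φ volume u E₀)
    (hlow : ∀ᶠ E in 𝓝[<] E₀, c * (E₀ - E) ^ k ≤ φ E) :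
    ∃ K, 0 < K ∧ ∀ u, 0 < u → u < E₀ → K * (E₀ - u) ^ (k + m + 1) ≤ hfun φ E₀ m u := by
  obtain ⟨v, ⟨hv, hvE⟩, hvlow⟩ :=
    (mem_nhdsLT_iff_exists_mem_Ico_Ioo_subset (half_lt_self hE₀)).1 hlow
  have hv0 : 0 < v := (half_pos hE₀).trans_le hv
  have hcab : 0 < cab k m := cab_pos hk (by linarith)
  set t := (E₀ - v) / E₀
  have ht0 : 0 < t := div_pos (by linarith) hE₀
  have ht1 : t ≤ 1 := (div_le_one hE₀).2 (by linarith)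
  have htE : t * E₀ = E₀ - v := div_mul_cancel₀ _ hE₀.ne'
  refine ⟨c * (2 * v) ^ m * cab k m * t ^ (k + m + 1), by positivity, fun u hu huE => ?_⟩
  -- The contraction towards `E₀` by `t` maps `(0, E₀)` into `(v, E₀)` and increases `u`.
  set w := E₀ - t * (E₀ - u) with hw
  have hd : 0 < E₀ - u := sub_pos.2 huE
  have hvw : v ≤ w := by nlinarith
  have huw : u ≤ w := by nlinarith
  have hwE : w < E₀ := sub_lt_self _ (by positivity)
  have hw0 : 0 < w := hv0.trans_le hvw
  have hEw : E₀ - w = t * (E₀ - u) := by rw [hw, sub_sub_cancel]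
  calc c * (2 * v) ^ m * cab k m * t ^ (k + m + 1) * (E₀ - u) ^ (k + m + 1)
      = c * (2 * v) ^ m * cab k m * (E₀ - w) ^ (k + m + 1) := by
        rw [hEw, mul_rpow ht0.le hd.le, mul_assoc]
    _ ≤ c * (2 * w) ^ m * cab k m * (E₀ - w) ^ (k + m + 1) := by
        have : 0 ≤ (E₀ - w) ^ (k + m + 1) := rpow_nonneg (by linarith) _
        gcongr
    _ ≤ hfun φ E₀ m w := mul_rpow_le_hfun hk hm hc.le hw0.le hwE (hφint w ⟨hw0, hwE.le⟩)
        fun E hE => hvlow ⟨hvw.trans_lt hE.1, hE.2⟩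
    _ ≤ hfun φ E₀ m u := hfun_antitoneOn hm hnonneg hφint ⟨hu, huE.le⟩ ⟨hw0, hwE.le⟩ huw

lemma intervalIntegrable_of_isBigO_rpow (hk : -1 < k) (hmeas : Measurable φ)
    (hnonneg : ∀ E, 0 < E → 0 ≤ φ E)
    (hloc : ∀ K : Set ℝ, IsCompact K → K ⊆ Ioo 0 E₀ → ∃ C : ℝ, ∀ᵐ E : ℝ, E ∈ K → φ E ≤ C)
    (hO : φ =O[𝓝[<] E₀] fun E => (E₀ - E) ^ k) (hu : 0 < u) (huE : u ≤ E₀) :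
    IntervalIntegrable φ volume u E₀ := by
  rcases huE.eq_or_lt with rfl | huE
  · exact IntervalIntegrable.refl
  have hend : IntegrableAtFilter φ (𝓝[<] E₀) := by
    refine hO.integrableAtFilter ⟨univ, univ_mem, hmeas.aestronglyMeasurable.restrict⟩ ?_
    refine ⟨Ioo u E₀, Ioo_mem_nhdsLT huE, ?_⟩
    exact (intervalIntegrable_iff_integrableOn_Ioo_of_le huE.le).1
      (intervalIntegrable_sub_rpow hk u E₀)
  obtain ⟨s, hs, hsint⟩ := hend
  obtain ⟨v, hvE, hvs⟩ := (mem_nhdsLT_iff_exists_Ioo_subset' huE).1 hs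
  have hbulk : IntegrableOn φ (Icc u v) := by
    obtain ⟨B, hB⟩ := hloc (Icc u v) isCompact_Icc (Icc_subset_Ioo hu hvE)
    refine Measure.integrableOn_of_bounded (M := B) measure_Icc_lt_top.ne
      hmeas.aestronglyMeasurable ?_
    rw [ae_restrict_iff' measurableSet_Icc]
    filter_upwards [hB] with E hE hEK
    rw [norm_of_nonneg (hnonneg E (hu.trans_le hEK.1))]
    exact hE hEK
  rw [intervalIntegrable_iff_integrableOn_Ioo_of_le huE.le]
  refine (hbulk.union (hsint.mono_set hvs)).mono_set fun E hE => ?_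
  exact (le_or_gt E v).imp (fun h => ⟨hE.1.le, h⟩) fun h => ⟨h, hE.2⟩

lemma isEquivalent_of_abs_sub_le {C δ ε : ℝ} (hc : c ≠ 0) (hδ : 0 < δ) (hε : 0 < ε)
    (hφ : ∀ E, E₀ - ε < E →
      |φ E - c * (max (E₀ - E) 0) ^ k| ≤ C * (max (E₀ - E) 0) ^ (k + δ)) :
    φ ~[𝓝[<] E₀] fun E => c * (E₀ - E) ^ k := by
  have hremainder : (φ - fun E => c * (E₀ - E) ^ k) =O[𝓝[<] E₀] fun E => (E₀ - E) ^ (k + δ) := by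
    refine IsBigO.of_bound C ?_
    filter_upwards [Ioo_mem_nhdsLT (sub_lt_self E₀ hε)] with E hE
    have hd : 0 ≤ E₀ - E := by linarith [hE.2]
    simpa only [max_eq_left hd, Pi.sub_apply, norm_eq_abs, abs_of_nonneg (rpow_nonneg hd _)]
      using hφ E hE.1
  have hsmall : Tendsto (fun E => (E₀ - E) ^ δ) (𝓝[<] E₀) (𝓝 0) := by
    have h : Continuous fun E => (E₀ - E) ^ δ :=
      Continuous.rpow_const (by fun_prop) fun _ => Or.inr hδ.le
    simpa only [sub_self, zero_rpow hδ.ne'] using (h.tendsto E₀).mono_left nhdsWithin_le_nhds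
  have hlittle : (fun E => (E₀ - E) ^ (k + δ)) =o[𝓝[<] E₀] fun E => (E₀ - E) ^ k := by
    refine ((isBigO_refl (fun E => (E₀ - E) ^ k) _).mul_isLittleO
      ((isLittleO_one_iff ℝ).2 hsmall)).congr' ?_ (by simp)
    filter_upwards [self_mem_nhdsWithin] with E hE
    rw [rpow_add (sub_pos.2 hE)]
  exact (isLittleO_const_mul_right_iff hc).2 (hremainder.trans_isLittleO hlittle)

lemma eventually_half_mul_rpow_le (hc : 0 < c) (hφ : φ ~[𝓝[<] E₀] fun E => c * (E₀ - E) ^ k) :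
    ∀ᶠ E in 𝓝[<] E₀, c / 2 * (E₀ - E) ^ k ≤ φ E := by
  filter_upwards [hφ.isLittleO.def one_half_pos, self_mem_nhdsWithin] with E hE hEE₀
  have hpos : 0 < (E₀ - E) ^ k := rpow_pos_of_pos (sub_pos.2 hEE₀) k
  rw [Pi.sub_apply, norm_eq_abs, norm_of_nonneg (by positivity)] at hE
  linarith [(abs_le.1 hE).1]

end Profile

section Matter

variable {φ mu : ℝ → ℝ} {E₀ k l c r : ℝ}

lemma rhoRedVE_nonneg (hl : -1 < l) (hnonneg : ∀ E, 0 < E → 0 ≤ φ E)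
    (hvanish : ∀ E, E₀ ≤ E → φ E = 0) (hr : 0 ≤ r) : 0 ≤ rhoRedVE φ E₀ l mu r := by
  have hcab : 0 < cab l (-(1 / 2)) := cab_pos hl (by norm_num)
  have hh (m : ℝ) : 0 ≤ hfun φ E₀ m (exp (mu r)) := hfun_nonneg hnonneg hvanish (exp_pos _)
  have hh₃ := hh (l + 3 / 2)
  have hh₁ := hh (l + 1 / 2)
  unfold rhoRedVE
  positivity

lemma pRedVE_nonneg (hl : -1 < l) (hnonneg : ∀ E, 0 < E → 0 ≤ φ E)
    (hvanish : ∀ E, E₀ ≤ E → φ E = 0) (hr : 0 ≤ r) : 0 ≤ pRedVE φ E₀ l mu r := by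
  have hcab : 0 < cab l (1 / 2) := cab_pos hl (by norm_num)
  have hh : 0 ≤ hfun φ E₀ (l + 3 / 2) (exp (mu r)) := hfun_nonneg hnonneg hvanish (exp_pos _)
  unfold pRedVE
  positivity

lemma rhoRedVE_eq_zero (hE₀ : 0 < E₀) (hvanish : ∀ E, E₀ ≤ E → φ E = 0) (hr : log E₀ ≤ mu r) :
    rhoRedVE φ E₀ l mu r = 0 := by
  have hE : E₀ ≤ exp (mu r) := (log_le_iff_le_exp hE₀).1 hr
  simp only [rhoRedVE, hfun_eq_zero hvanish hE, mul_zero, add_zero]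

lemma exp_mul_sub_le_exp_sub_exp (a b : ℝ) : exp a * (b - a) ≤ exp b - exp a := by
  have h : exp a * exp (b - a) = exp b := by rw [← exp_add, add_sub_cancel]
  nlinarith [add_one_le_exp (b - a), exp_pos a]

lemma exists_mul_rpow_le_rhoRedVE (hk : -1 < k) (hl : -(1 / 2) ≤ l) (hE₀ : 0 < E₀) (hc : 0 < c)
    (hnonneg : ∀ E, 0 < E → 0 ≤ φ E) (hvanish : ∀ E, E₀ ≤ E → φ E = 0)
    (hφint : ∀ u ∈ Ioc 0 E₀, IntervalIntegrable φ volume u E₀)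
    (hlow : ∀ᶠ E in 𝓝[<] E₀, c * (E₀ - E) ^ k ≤ φ E) (a : ℝ) :
    ∃ K, 0 < K ∧ ∀ mu r, 0 ≤ r → a ≤ mu r → mu r < log E₀ →
      K * r ^ (2 * l) * (log E₀ - mu r) ^ (k + l + 3 / 2) ≤ rhoRedVE φ E₀ l mu r := by
  obtain ⟨K, hK, hh⟩ := exists_mul_rpow_le_hfun (m := l + 1 / 2) hk (by linarith) hE₀ hc
    hnonneg hφint hlow
  rw [show k + (l + 1 / 2) + 1 = k + l + 3 / 2 by ring] at hh
  set n := k + l + 3 / 2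
  have hn : 0 ≤ n := by simp only [n]; linarith
  have hcab : 0 < cab l (-(1 / 2)) := cab_pos (by linarith) (by norm_num)
  refine ⟨2 * π * cab l (-(1 / 2)) * exp (-(2 * l + 2) * log E₀) * (K * exp a ^ n),
    by positivity, fun mu r hr ha hmu => ?_⟩
  have hy : 0 < log E₀ - mu r := sub_pos.2 hmu
  have henergy : exp a * (log E₀ - mu r) ≤ E₀ - exp (mu r) :=
    calc exp a * (log E₀ - mu r) ≤ exp (mu r) * (log E₀ - mu r) := by gcongr
      _ ≤ E₀ - exp (mu r) := by
        simpa only [exp_log hE₀] using exp_mul_sub_le_exp_sub_exp (mu r) (log E₀)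
  have hmoment : K * exp a ^ n * (log E₀ - mu r) ^ n ≤ hfun φ E₀ (l + 1 / 2) (exp (mu r)) :=
    calc K * exp a ^ n * (log E₀ - mu r) ^ n = K * (exp a * (log E₀ - mu r)) ^ n := by
          rw [mul_rpow (exp_pos a).le hy.le, mul_assoc]
      _ ≤ K * (E₀ - exp (mu r)) ^ n := by gcongr
      _ ≤ _ := hh _ (exp_pos _) ((lt_log_iff_exp_lt hE₀).1 hmu)
  have hweight : exp (-(2 * l + 2) * log E₀) ≤ exp (-(2 * l + 2) * mu r) :=
    exp_le_exp.2 (by nlinarith)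
  have hpressure : 0 ≤ exp (-(2 * l + 4) * mu r) * hfun φ E₀ (l + 3 / 2) (exp (mu r)) :=
    mul_nonneg (exp_pos _).le (hfun_nonneg hnonneg hvanish (exp_pos _))
  calc _ = 2 * π * cab l (-(1 / 2)) * r ^ (2 * l) *
        (exp (-(2 * l + 2) * log E₀) * (K * exp a ^ n * (log E₀ - mu r) ^ n)) := by ring
    _ ≤ 2 * π * cab l (-(1 / 2)) * r ^ (2 * l) *
        (exp (-(2 * l + 2) * mu r) * hfun φ E₀ (l + 1 / 2) (exp (mu r))) := by gcongr
    _ ≤ rhoRedVE φ E₀ l mu r := by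
        unfold rhoRedVE
        gcongr
        exact le_add_of_nonneg_left hpressure

end Matter

lemma add_div_le_of_div_sq_le_deriv {f f' : ℝ → ℝ} {M L r : ℝ} (hr : 0 < r)
    (hf : ∀ s, r ≤ s → HasDerivAt f (f' s) s) (hf' : ∀ s, r ≤ s → M / s ^ 2 ≤ f' s)
    (hL : ∀ s, r ≤ s → f s ≤ L) : f r + M / r ≤ L := by
  have hmono : MonotoneOn (fun s => f s + M * s⁻¹) (Ici r) := by
    have hderiv : ∀ s ∈ Ici r, HasDerivAt (fun s => f s + M * s⁻¹) (f' s + M * -(s ^ 2)⁻¹) s :=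
      fun s hs => (hf s hs).add ((hasDerivAt_inv (hr.trans_le hs).ne').const_mul M)
    refine monotoneOn_of_hasDerivWithinAt_nonneg (convex_Ici r)
      (fun s hs => (hderiv s hs).continuousAt.continuousWithinAt)
      (fun s hs => (hderiv s (interior_subset hs)).hasDerivWithinAt) fun s hs => ?_
    have := hf' s (interior_subset hs)
    rw [div_eq_mul_inv] at this
    linarith
  have hlim : Tendsto (fun s : ℝ => L + M * s⁻¹) atTop (𝓝 (L + M * 0)) :=
    (tendsto_inv_atTop_zero.const_mul M).const_add L
  rw [mul_zero, add_zero] at hlim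
  refine ge_of_tendsto hlim ?_
  filter_upwards [eventually_ge_atTop r] with s hs
  calc f r + M / r ≤ f s + M * s⁻¹ := hmono self_mem_Ici hs hs
    _ ≤ L + M * s⁻¹ := by gcongr; exact hL s hs

lemma exists_deriv_lt_rpow_mul_rpow {m m' : ℝ → ℝ} {K n a r₀ : ℝ} (hK : 0 < K) (hn : 1 < n)
    (ha : -1 < a) (hr₀ : 0 < r₀) (hm : ∀ r, r₀ ≤ r → HasDerivAt m (m' r) r)
    (hpos : ∀ r, r₀ ≤ r → 0 < m r) : ∃ r, r₀ ≤ r ∧ m' r < K * r ^ a * m r ^ n := by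
  by_contra! hgrowth
  have ha1 : 0 < a + 1 := by linarith
  set q := (n - 1) * K / (a + 1) with hq
  have hqpos : 0 < q := div_pos (mul_pos (by linarith) hK) ha1
  have hanti : AntitoneOn (fun r => m r ^ (1 - n) + q * r ^ (a + 1)) (Ici r₀) := by
    have hderiv : ∀ r ∈ Ici r₀, HasDerivAt (fun r => m r ^ (1 - n) + q * r ^ (a + 1))
        (m' r * (1 - n) * m r ^ (1 - n - 1) + q * ((a + 1) * r ^ (a + 1 - 1))) r := fun r hr =>
      ((hm r hr).rpow_const (Or.inl (hpos r hr).ne')).add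
        ((hasDerivAt_rpow_const (Or.inl (hr₀.trans_le hr).ne')).const_mul q)
    refine antitoneOn_of_hasDerivWithinAt_nonpos (convex_Ici r₀)
      (fun r hr => (hderiv r hr).continuousAt.continuousWithinAt)
      (fun r hr => (hderiv r (interior_subset hr)).hasDerivWithinAt) fun r hr => ?_
    have hr := interior_subset hr
    have hmr : 0 < m r := hpos r hr
    have hrate : K * r ^ a ≤ m' r * m r ^ (-n) := by
      rw [rpow_neg hmr.le, ← div_eq_mul_inv, le_div_iff₀ (rpow_pos_of_pos hmr n)]
      exact hgrowth r hr
    calc m' r * (1 - n) * m r ^ (1 - n - 1) + q * ((a + 1) * r ^ (a + 1 - 1))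
        = (n - 1) * (K * r ^ a - m' r * m r ^ (-n)) := by
          rw [show 1 - n - 1 = -n by ring, add_sub_cancel_right, hq]
          field_simp
          ring
      _ ≤ 0 := mul_nonpos_of_nonneg_of_nonpos (by linarith) (by linarith)
  have hlim : Tendsto (fun r : ℝ => q * r ^ (a + 1)) atTop atTop :=
    (tendsto_rpow_atTop ha1).const_mul_atTop hqpos
  obtain ⟨r, hlarge, hr⟩ := ((hlim.eventually_gt_atTop
    (m r₀ ^ (1 - n) + q * r₀ ^ (a + 1))).and (eventually_ge_atTop r₀)).exists
  have hle : m r ^ (1 - n) + q * r ^ (a + 1) ≤ m r₀ ^ (1 - n) + q * r₀ ^ (a + 1) :=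
    hanti self_mem_Ici hr hr
  linarith [rpow_pos_of_pos (hpos r hr) (1 - n)]

/-- The Misner–Sharp (quasi-local) mass inside radius `r` of the metric with radial coefficient
`e^{2λ}`, so that `e^{-2λ} = 1 - 2 m / r` for `r ≠ 0`. -/
noncomputable def misnerSharpMass (lam : ℝ → ℝ) (r : ℝ) : ℝ :=
  r / 2 * (1 - exp (-2 * lam r))

/-- The static spherically symmetric Einstein equations for the metric coefficients `λ`, `μ` with
energy density `ρ` and radial pressure `p`. Besides differentiability for `r > 0`, the only
regularity required at the center is continuity of `λ`. -/
structure IsStaticEinsteinSolution (lam mu ρ p : ℝ → ℝ) : Prop where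
  continuousWithinAt_lam : ContinuousWithinAt lam (Ici 0) 0
  differentiableOn_lam : DifferentiableOn ℝ lam (Ioi 0)
  differentiableOn_mu : DifferentiableOn ℝ mu (Ioi 0)
  density_eq : ∀ r ∈ Ioi (0 : ℝ),
    exp (-2 * lam r) * (2 * r * deriv lam r - 1) + 1 = 8 * π * r ^ 2 * ρ r
  pressure_eq : ∀ r ∈ Ioi (0 : ℝ),
    exp (-2 * lam r) * (2 * r * deriv mu r + 1) - 1 = 8 * π * r ^ 2 * p r

namespace IsStaticEinsteinSolution

variable {lam mu ρ p : ℝ → ℝ} {r : ℝ}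

lemma hasDerivAt_mu (h : IsStaticEinsteinSolution lam mu ρ p) (hr : 0 < r) :
    HasDerivAt mu (deriv mu r) r :=
  (h.differentiableOn_mu.differentiableAt (Ioi_mem_nhds hr)).hasDerivAt

lemma hasDerivAt_misnerSharpMass (h : IsStaticEinsteinSolution lam mu ρ p) (hr : 0 < r) :
    HasDerivAt (misnerSharpMass lam) (4 * π * r ^ 2 * ρ r) r := by
  have hlam := (h.differentiableOn_lam.differentiableAt (Ioi_mem_nhds hr)).hasDerivAt
  refine (((hasDerivAt_id r).div_const 2).mul
    (((hlam.const_mul (-2)).exp).const_sub 1)).congr_deriv ?_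
  simp only [id]
  linear_combination h.density_eq r hr / 2

lemma continuousOn_misnerSharpMass (h : IsStaticEinsteinSolution lam mu ρ p) :
    ContinuousOn (misnerSharpMass lam) (Ici 0) := by
  intro r hr
  rcases (mem_Ici.1 hr).eq_or_lt with rfl | hr
  · have := h.continuousWithinAt_lam
    unfold misnerSharpMass
    fun_prop
  · exact (h.hasDerivAt_misnerSharpMass hr).continuousAt.continuousWithinAt

lemma monotoneOn_misnerSharpMass (h : IsStaticEinsteinSolution lam mu ρ p)
    (hρ : ∀ r, 0 < r → 0 ≤ ρ r) : MonotoneOn (misnerSharpMass lam) (Ici 0) := by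
  refine monotoneOn_of_hasDerivWithinAt_nonneg (f' := fun r => 4 * π * r ^ 2 * ρ r)
    (convex_Ici 0) h.continuousOn_misnerSharpMass (fun r hr => ?_) fun r hr => ?_
  all_goals rw [interior_Ici, mem_Ioi] at hr
  · exact (h.hasDerivAt_misnerSharpMass hr).hasDerivWithinAt
  · have := hρ r hr
    positivity

lemma misnerSharpMass_nonneg (h : IsStaticEinsteinSolution lam mu ρ p)
    (hρ : ∀ r, 0 < r → 0 ≤ ρ r) (hr : 0 ≤ r) : 0 ≤ misnerSharpMass lam r := by
  simpa only [misnerSharpMass, zero_div, zero_mul] using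
    h.monotoneOn_misnerSharpMass hρ self_mem_Ici hr hr

lemma misnerSharpMass_div_sq_le_deriv_mu (h : IsStaticEinsteinSolution lam mu ρ p)
    (hρ : ∀ r, 0 < r → 0 ≤ ρ r) (hp : ∀ r, 0 < r → 0 ≤ p r) (hr : 0 < r) :
    misnerSharpMass lam r / r ^ 2 ≤ deriv mu r := by
  have hmass := h.misnerSharpMass_nonneg hρ hr.le
  have hfield := h.pressure_eq r hr
  have hpr : 0 ≤ 8 * π * r ^ 2 * p r := by
    have := hp r hr
    positivity
  rw [misnerSharpMass] at hmass ⊢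
  set e := exp (-2 * lam r)
  have he : 0 < e := exp_pos _
  have he1 : 0 ≤ 1 - e := nonneg_of_mul_nonneg_right hmass (by positivity)
  have hlower : 1 - e ≤ e * (2 * r * deriv mu r) := by linarith
  have hmu : 0 ≤ 2 * r * deriv mu r := nonneg_of_mul_nonneg_right (he1.trans hlower) he
  have hcompact : 1 - e ≤ 2 * r * deriv mu r :=
    hlower.trans (mul_le_of_le_one_left hmu (by linarith))
  rw [div_le_iff₀ (by positivity)]
  nlinarith

lemma monotoneOn_mu (h : IsStaticEinsteinSolution lam mu ρ p)
    (hρ : ∀ r, 0 < r → 0 ≤ ρ r) (hp : ∀ r, 0 < r → 0 ≤ p r) : MonotoneOn mu (Ioi 0) := by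
  refine monotoneOn_of_deriv_nonneg (convex_Ioi 0) h.differentiableOn_mu.continuousOn ?_ ?_ <;>
    rw [interior_Ioi]
  · exact h.differentiableOn_mu
  · intro r hr
    exact (div_nonneg (h.misnerSharpMass_nonneg hρ (le_of_lt hr)) (sq_nonneg r)).trans
      (h.misnerSharpMass_div_sq_le_deriv_mu hρ hp hr)

lemma misnerSharpMass_div_le_sub_mu (h : IsStaticEinsteinSolution lam mu ρ p)
    (hρ : ∀ r, 0 < r → 0 ≤ ρ r) (hp : ∀ r, 0 < r → 0 ≤ p r) {L : ℝ} (hr : 0 < r)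
    (hL : ∀ s, r ≤ s → mu s ≤ L) : misnerSharpMass lam r / r ≤ L - mu r := by
  have hbound : mu r + misnerSharpMass lam r / r ≤ L := by
    refine add_div_le_of_div_sq_le_deriv hr (fun s hs => h.hasDerivAt_mu (hr.trans_le hs))
      (fun s hs => ?_) hL
    calc misnerSharpMass lam r / s ^ 2 ≤ misnerSharpMass lam s / s ^ 2 := by
          gcongr
          exact h.monotoneOn_misnerSharpMass hρ hr.le (hr.le.trans hs) hs
      _ ≤ deriv mu s := h.misnerSharpMass_div_sq_le_deriv_mu hρ hp (hr.trans_le hs)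
  linarith

lemma misnerSharpMass_pos (h : IsStaticEinsteinSolution lam mu ρ p)
    (hρ : ∀ r, 0 < r → 0 ≤ ρ r) {r₀ : ℝ} (hr₀ : 0 ≤ r₀) (hpos : ∀ s, r₀ < s → 0 < ρ s)
    (hr : r₀ < r) : 0 < misnerSharpMass lam r := by
  have hstrict : StrictMonoOn (misnerSharpMass lam) (Ioi r₀) := by
    have hderiv : ∀ s ∈ Ioi r₀, HasDerivAt (misnerSharpMass lam) (4 * π * s ^ 2 * ρ s) s :=
      fun s hs => h.hasDerivAt_misnerSharpMass (hr₀.trans_lt hs)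
    refine strictMonoOn_of_hasDerivWithinAt_pos (convex_Ioi r₀)
      (fun s hs => (hderiv s hs).continuousAt.continuousWithinAt)
      (fun s hs => (hderiv s (interior_subset hs)).hasDerivWithinAt) fun s hs => ?_
    have hs := interior_subset hs
    have := hpos s hs
    have := hr₀.trans_lt hs
    positivity
  obtain ⟨s, hs, hsr⟩ := exists_between hr
  exact (h.misnerSharpMass_nonneg hρ (hr₀.trans hs.le)).trans_lt (hstrict hs hr hsr)

theorem exists_le_mu (h : IsStaticEinsteinSolution lam mu ρ p)
    (hρ : ∀ r, 0 < r → 0 ≤ ρ r) (hp : ∀ r, 0 < r → 0 ≤ p r) {L K n b r₀ : ℝ} (hr₀ : 0 < r₀)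
    (hK : 0 < K) (hn : 1 < n) (hnb : n < b + 3)
    (hlow : ∀ r, r₀ ≤ r → mu r < L → K * r ^ b * (L - mu r) ^ n ≤ ρ r) :
    ∃ R, r₀ ≤ R ∧ L ≤ mu R := by
  by_contra! hmu
  have hpos : ∀ r, r₀ < r → 0 < ρ r := fun r hr => by
    have := sub_pos.2 (hmu r hr.le)
    have := hr₀.trans hr
    exact lt_of_lt_of_le (by positivity) (hlow r hr.le (hmu r hr.le))
  obtain ⟨r, hr, hlt⟩ := exists_deriv_lt_rpow_mul_rpow (K := 4 * π * K) (a := b + 2 - n)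
    (r₀ := r₀ + 1) (by positivity) hn (by linarith) (by linarith)
    (fun r hr => h.hasDerivAt_misnerSharpMass (by linarith))
    (fun r hr => h.misnerSharpMass_pos hρ hr₀.le hpos (by linarith))
  have hr' : r₀ ≤ r := by linarith
  have hr0 : 0 < r := hr₀.trans_le hr'
  have hmass := h.misnerSharpMass_nonneg hρ hr0.le
  have hpotential : misnerSharpMass lam r / r ≤ L - mu r :=
    h.misnerSharpMass_div_le_sub_mu hρ hp hr0 fun s hs => (hmu s (hr'.trans hs)).le
  refine hlt.not_ge ?_
  calc 4 * π * K * r ^ (b + 2 - n) * misnerSharpMass lam r ^ n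
      = 4 * π * r ^ 2 * (K * r ^ b * (misnerSharpMass lam r / r) ^ n) := by
        rw [div_rpow hmass hr0.le, rpow_sub hr0, rpow_add hr0, rpow_two]
        ring
    _ ≤ 4 * π * r ^ 2 * (K * r ^ b * (L - mu r) ^ n) := by gcongr
    _ ≤ 4 * π * r ^ 2 * ρ r := by
        gcongr
        exact hlow r hr' (hmu r hr')

lemma integrableOn_sq_mul_density (h : IsStaticEinsteinSolution lam mu ρ p)
    (hρ : ∀ r, 0 < r → 0 ≤ ρ r) {R : ℝ} (hR : ∀ r, R ≤ r → ρ r = 0) :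
    IntegrableOn (fun r => r ^ 2 * ρ r) (Ioi 0) := by
  have hmass : IntegrableOn (fun r => 4 * π * r ^ 2 * ρ r) (Ioc 0 R) :=
    intervalIntegral.integrableOn_deriv_of_nonneg
      (h.continuousOn_misnerSharpMass.mono Icc_subset_Ici_self)
      (fun r hr => h.hasDerivAt_misnerSharpMass hr.1)
      fun r hr => mul_nonneg (by positivity) (hρ r hr.1)
  have hinner : IntegrableOn (fun r => r ^ 2 * ρ r) (Ioc 0 R) := by
    refine IntegrableOn.congr_fun (hmass.const_mul (4 * π)⁻¹) (fun r _ => ?_) measurableSet_Ioc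
    simp only [mul_assoc (4 * π), inv_mul_cancel_left₀ (by positivity : 4 * π ≠ 0)]
  refine hinner.of_forall_sdiff_eq_zero measurableSet_Ioi fun r hr => ?_
  have hRr : R ≤ r := le_of_not_ge fun hrR => hr.2 ⟨hr.1, hrR⟩
  simp only [hR r hRr, mul_zero]

end IsStaticEinsteinSolution

theorem main_relativistic_general {k l E₀ c : ℝ} (hk : -1 < k) (hl : -(1 / 2) ≤ l)
    (hkl : 0 < k + l + 1 / 2) (hkl' : k < l + 3 / 2) (hE₀ : 0 < E₀) (hc : 0 < c) {φ : ℝ → ℝ}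
    (hnonneg : ∀ E, 0 < E → 0 ≤ φ E) (hvanish : ∀ E, E₀ ≤ E → φ E = 0)
    (hφint : ∀ u ∈ Ioc 0 E₀, IntervalIntegrable φ volume u E₀)
    (hlow : ∀ᶠ E in 𝓝[<] E₀, c * (E₀ - E) ^ k ≤ φ E) {lam mu : ℝ → ℝ}
    (hsol : IsStaticEinsteinSolution lam mu (rhoRedVE φ E₀ l mu) (pRedVE φ E₀ l mu)) :
    (∃ R : ℝ, ∀ r, R ≤ r → rhoRedVE φ E₀ l mu r = 0) ∧
      IntegrableOn (fun r => r ^ 2 * rhoRedVE φ E₀ l mu r) (Ioi 0) := by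
  have hρ : ∀ r, 0 < r → 0 ≤ rhoRedVE φ E₀ l mu r := fun r hr =>
    rhoRedVE_nonneg (by linarith) hnonneg hvanish hr.le
  have hp : ∀ r, 0 < r → 0 ≤ pRedVE φ E₀ l mu r := fun r hr =>
    pRedVE_nonneg (by linarith) hnonneg hvanish hr.le
  have hmono : MonotoneOn mu (Ioi 0) := hsol.monotoneOn_mu hρ hp
  obtain ⟨K, hK, hρlow⟩ :=
    exists_mul_rpow_le_rhoRedVE hk hl hE₀ hc hnonneg hvanish hφint hlow (mu 1)
  obtain ⟨R, hR1, hR⟩ : ∃ R, 1 ≤ R ∧ log E₀ ≤ mu R :=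
    hsol.exists_le_mu hρ hp one_pos hK (by linarith) (by linarith) fun r hr =>
      hρlow mu r (by linarith) (hmono (mem_Ioi.2 one_pos) (zero_lt_one.trans_le hr) hr)
  have hzero : ∀ r, R ≤ r → rhoRedVE φ E₀ l mu r = 0 := fun r hr =>
    rhoRedVE_eq_zero hE₀ hvanish
      (hR.trans (hmono (zero_lt_one.trans_le hR1) (zero_lt_one.trans_le (hR1.trans hr)) hr))
  exact ⟨⟨R, hzero⟩, hsol.integrableOn_sq_mul_density hρ hzero⟩

theorem main_relativistic
    (k l E₀ c δ : ℝ) (hk : -1 < k) (hl : -(1/2 : ℝ) < l)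
    (hkl : 0 < k + l + 1 / 2) (hkl' : k < l + 3 / 2)
    (hE₀ : 0 < E₀) (hc : 0 < c) (hδ : 0 < δ)
    (φ : ℝ → ℝ) (hmeas : Measurable φ) (hnonneg : ∀ E, 0 < E → 0 ≤ φ E)
    (hvanish : ∀ E, E₀ ≤ E → φ E = 0)
    (hloc : ∀ K : Set ℝ, IsCompact K → K ⊆ Ioo 0 E₀ →
      ∃ C : ℝ, ∀ᵐ E : ℝ, E ∈ K → φ E ≤ C)
    (hasymp : ∃ C ε : ℝ, 0 < ε ∧ ∀ E, E₀ - ε < E →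
      |φ E - c * (max (E₀ - E) 0) ^ k| ≤ C * (max (E₀ - E) 0) ^ (k + δ))
    (lam mu : ℝ → ℝ)
    (hlamC1 : ContDiffOn ℝ 1 lam (Ici 0)) (hmuC1 : ContDiffOn ℝ 1 mu (Ici 0))
    (hlam0 : lam 0 = 0)
    (hfield1 : ∀ r ∈ Ioi (0 : ℝ),
      Real.exp (-2 * lam r) * (2 * r * deriv lam r - 1) + 1 =
        8 * Real.pi * r ^ 2 * rhoRedVE φ E₀ l mu r)
    (hfield2 : ∀ r ∈ Ioi (0 : ℝ),
      Real.exp (-2 * lam r) * (2 * r * deriv mu r + 1) - 1 =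
        8 * Real.pi * r ^ 2 * pRedVE φ E₀ l mu r) :
    (∃ R : ℝ, ∀ r, R ≤ r → rhoRedVE φ E₀ l mu r = 0) ∧
      IntegrableOn (fun r => r ^ 2 * rhoRedVE φ E₀ l mu r) (Ioi 0) := by
  obtain ⟨C, ε, hε, hφ⟩ := hasymp
  have hequiv : φ ~[𝓝[<] E₀] fun E => c * (E₀ - E) ^ k :=
    isEquivalent_of_abs_sub_le hc.ne' hδ hε hφ
  have hsol : IsStaticEinsteinSolution lam mu (rhoRedVE φ E₀ l mu) (pRedVE φ E₀ l mu) :=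
    ⟨hlamC1.continuousOn 0 self_mem_Ici,
      (hlamC1.differentiableOn one_ne_zero).mono Ioi_subset_Ici_self,
      (hmuC1.differentiableOn one_ne_zero).mono Ioi_subset_Ici_self, hfield1, hfield2⟩
  exact main_relativistic_general hk hl.le hkl hkl' hE₀ (half_pos hc) hnonneg hvanish
    (fun _ hu => intervalIntegrable_of_isBigO_rpow hk hmeas hnonneg hloc
      (hequiv.isBigO.trans (isBigO_const_mul_self c _ _)) hu.1 hu.2)
    (eventually_half_mul_rpow_le hc hequiv) hsol
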